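/- Fix t > 0, ξ > 0, y₀ > 0, p < 1 and k > 0, and set β_p := 1/(3-2p). Let C(k,τ) be the call price in the absorbed CEV-variance model, and suppose σ : (0, τ₀) → (0,∞) satisfies BS(k, σ(τ)², τ) = C(k,τ) for all τ ∈ (0,τ₀) (the implied volatility). Then lim_{τ→0⁺} σ(τ)² / [ (1 - β_p)·( k²ξ²t(1-p)/(2τ) )^{β_p} ] = 1; that is, σ(τ)² ∼ (1-β_p)·(k²ξ²t(1-p)/(2τ))^{β_p} as τ → 0⁺. -/

import Mathlib

/-- The standard normal cumulative distribution function. -/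
noncomputable def Phi (x : ℝ) : ℝ :=
  ∫ s in Set.Iic x, Real.exp (-(s ^ 2) / 2) / Real.sqrt (2 * Real.pi)

/-- The Black–Scholes call price. -/
noncomputable def BS (k w T : ℝ) : ℝ :=
  Phi (-k / Real.sqrt (w * T) + Real.sqrt (w * T) / 2)
    - Real.exp k * Phi (-k / Real.sqrt (w * T) - Real.sqrt (w * T) / 2)

/-- The modified Bessel function of the first kind of order `ν`. -/
noncomputable def besselI (ν x : ℝ) : ℝ :=
  ∑' m : ℕ, (x / 2) ^ (2 * (m : ℝ) + ν) / ((m.factorial : ℝ) * Real.Gamma ((m : ℝ) + ν + 1))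

open Filter MeasureTheory ProbabilityTheory Real Set Topology

/-!
As the total variance `v = w * τ` tends to `0`, Gaussian tail bounds give
`log (BS k w τ) ∼ -k ^ 2 / (2 * v)`. By the power series of the Bessel function, the CEV density
behaves like `exp (-b * y ^ r)` with `r = 2 * (1 - p)` and `b = 1 / (2 * ξ ^ 2 * t * (1 - p) ^ 2)`,
up to factors of lower exponential order. Laplace's method then says that the logarithm of the mixed
price is asymptotically minus the minimum `Λ` over `y` of `k ^ 2 / (2 * τ) / y + b * y ^ r`.
Comparing the two logarithms, `w ∼ k ^ 2 / (2 * τ) / Λ`, which is the claim: in terms of the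
minimizer `Y`, the right-hand side is `r / (1 + r) * Y`.
-/

lemma le_setIntegral_of_forall_mem_Icc_add_one {f : ℝ → ℝ} {s : Set ℝ} {a c : ℝ}
    (hs : MeasurableSet s) (hf : IntegrableOn f s) (hf₀ : ∀ x ∈ s, 0 ≤ f x)
    (has : Icc a (a + 1) ⊆ s) (hc : ∀ x ∈ Icc a (a + 1), c ≤ f x) : c ≤ ∫ x in s, f x :=
  calc c = c * volume.real (Icc a (a + 1)) := by rw [volume_real_Icc_of_le (by linarith)]; ring
    _ ≤ ∫ x in Icc a (a + 1), f x :=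
      setIntegral_ge_of_const_le_real measurableSet_Icc (by simp) hc (hf.mono_set has)
    _ ≤ ∫ x in s, f x :=
      setIntegral_mono_set hf (ae_restrict_of_forall_mem hs hf₀) has.eventuallyLE

/-! ### The normal distribution -/

lemma gaussianPDFReal_zero_one (x : ℝ) :
    gaussianPDFReal 0 1 x = exp (-(x ^ 2) / 2) / √(2 * π) := by
  simp [gaussianPDFReal_def, div_eq_inv_mul]

lemma Phi_eq_integral (x : ℝ) : Phi x = ∫ z in Iic x, gaussianPDFReal 0 1 z := by
  simp only [Phi, gaussianPDFReal_zero_one]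

lemma Phi_eq_cdf (x : ℝ) : Phi x = cdf (gaussianReal 0 1) x := by
  rw [cdf_eq_real, measureReal_def, gaussianReal_apply_eq_integral _ one_ne_zero,
    ENNReal.toReal_ofReal (integral_nonneg fun z => gaussianPDFReal_nonneg 0 1 z), Phi_eq_integral]

lemma monotone_Phi : Monotone Phi := fun x y hxy => by
  simpa only [Phi_eq_cdf] using monotone_cdf (gaussianReal 0 1) hxy

lemma Phi_le_one (x : ℝ) : Phi x ≤ 1 := Phi_eq_cdf x ▸ cdf_le_one _ x

lemma Phi_neg_le {d : ℝ} (hd : 0 ≤ d) : Phi (-d) ≤ exp (-(d ^ 2 / 2)) := by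
  have chernoff := measure_le_le_exp_mul_mgf (X := id) (-d) (neg_nonpos.2 hd)
    (integrable_exp_mul_gaussianReal (μ := 0) (v := 1) (-d))
  rw [mgf_id_gaussianReal, ← exp_add] at chernoff
  rw [Phi_eq_cdf, cdf_eq_real]
  refine chernoff.trans_eq (congrArg exp ?_)
  push_cast
  ring

lemma gaussianPDFReal_le_Phi {d : ℝ} (hd : 0 ≤ d) : gaussianPDFReal 0 1 (d + 1) ≤ Phi (-d) := by
  rw [Phi_eq_integral]
  refine le_setIntegral_of_forall_mem_Icc_add_one measurableSet_Iic
    (integrable_gaussianPDFReal 0 1).integrableOn (fun z _ => gaussianPDFReal_nonneg 0 1 z)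
    (a := -d - 1) (fun z hz => by simpa using hz.2) ?_
  rintro z ⟨hz, hz'⟩
  simp only [gaussianPDFReal_zero_one]
  gcongr exp (?_ / 2) / _
  nlinarith

lemma Phi_pos (x : ℝ) : 0 < Phi x :=
  (gaussianPDFReal_pos 0 1 _ one_ne_zero).trans_le <|
    (gaussianPDFReal_le_Phi (abs_nonneg x)).trans (monotone_Phi (neg_abs_le x))

/-! ### Black–Scholes prices for small total variance -/

lemma BS_eq_BS_mul_one (k w T : ℝ) : BS k w T = BS k (w * T) 1 := by
  simp only [BS, mul_one]

lemma measurable_BS (k T : ℝ) : Measurable fun w => BS k w T := by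
  have := monotone_Phi.measurable
  unfold BS
  fun_prop

lemma BS_le_Phi (k w T : ℝ) : BS k w T ≤ Phi (-k / √(w * T) + √(w * T) / 2) :=
  sub_le_self _ (mul_nonneg (exp_pos k).le (Phi_pos _).le)

-- With `v = w * T` and `d₁ = -k / √v + √v / 2`, `d₁ ^ 2 / 2 = k ^ 2 / (2 * v) - k / 2 + v / 8`.
lemma BS_le_exp {k w T : ℝ} (hk : 0 ≤ k) (hv : 0 < w * T) :
    BS k w T ≤ exp (k / 2 - k ^ 2 / (2 * (w * T))) := by
  refine (BS_le_Phi k w T).trans ?_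
  obtain ⟨s, hs, hsv⟩ : ∃ s, 0 < s ∧ w * T = s ^ 2 :=
    ⟨√(w * T), sqrt_pos.2 hv, (sq_sqrt hv.le).symm⟩
  rw [hsv, sqrt_sq hs.le]
  rcases le_total (s / 2) (k / s) with h | h
  · calc Phi (-k / s + s / 2) = Phi (-(k / s - s / 2)) := by ring_nf
      _ ≤ exp (-((k / s - s / 2) ^ 2 / 2)) := Phi_neg_le (by linarith)
      _ = exp (k / 2 - k ^ 2 / (2 * s ^ 2) - s ^ 2 / 8) := by congr 1; field_simp; ring
      _ ≤ exp (k / 2 - k ^ 2 / (2 * s ^ 2)) := exp_le_exp.2 (by linarith [sq_nonneg s])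
  · refine (Phi_le_one _).trans (one_le_exp (sub_nonneg.2 ?_))
    rw [div_le_iff₀ hs] at h
    rw [div_le_div_iff₀ (by positivity) two_pos]
    nlinarith

lemma exp_mul_gaussianPDFReal_sub (k z : ℝ) {s : ℝ} (hs : s ≠ 0) :
    exp k * gaussianPDFReal 0 1 (z - s) =
      gaussianPDFReal 0 1 z * exp (s * (z - (-k / s + s / 2))) := by
  simp only [gaussianPDFReal_zero_one]
  rw [← mul_div_assoc, ← exp_add, div_mul_eq_mul_div, ← exp_add]
  congr 2
  field_simp
  ring

lemma exp_mul_Phi_eq_integral (k : ℝ) {s : ℝ} (hs : s ≠ 0) :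
    exp k * Phi (-k / s - s / 2) = ∫ z in Iic (-k / s + s / 2),
      gaussianPDFReal 0 1 z * exp (s * (z - (-k / s + s / 2))) := by
  have shift := (measurePreserving_sub_right volume s).setIntegral_preimage_emb
    (MeasurableEquiv.subRight s).measurableEmbedding (gaussianPDFReal 0 1) (Iic (-k / s - s / 2))
  rw [preimage_sub_const_Iic, show -k / s - s / 2 + s = -k / s + s / 2 by ring] at shift
  simp_rw [Phi_eq_integral, ← shift, ← integral_const_mul, exp_mul_gaussianPDFReal_sub k _ hs]

-- `BS = ∫_{z ≤ d₁} φ(z) (1 - exp (√v (z - d₁)))`; the integrand is nonnegative, and at least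
-- `φ(z) (1 - exp (-√v))` as soon as `z ≤ d₁ - 1`.
lemma Phi_mul_one_sub_exp_le_BS (k : ℝ) {w T : ℝ} (hv : 0 < w * T) :
    Phi (-k / √(w * T) - 1) * (1 - exp (-√(w * T))) ≤ BS k w T := by
  unfold BS
  have hs : 0 < √(w * T) := sqrt_pos.2 hv
  set s := √(w * T)
  set d₁ := -k / s + s / 2 with hd₁
  have integrable_pdf := integrable_gaussianPDFReal 0 1
  have integrable_shifted : Integrable fun z => gaussianPDFReal 0 1 z * exp (s * (z - d₁)) :=
    ((integrable_pdf.comp_sub_right s).const_mul (exp k)).congr <|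
      ae_of_all _ fun z => exp_mul_gaussianPDFReal_sub k z hs.ne'
  calc Phi (-k / s - 1) * (1 - exp (-s))
      = ∫ z in Iic (-k / s - 1), gaussianPDFReal 0 1 z * (1 - exp (-s)) := by
        rw [integral_mul_const, Phi_eq_integral]
    _ ≤ ∫ z in Iic (-k / s - 1),
          (gaussianPDFReal 0 1 z - gaussianPDFReal 0 1 z * exp (s * (z - d₁))) := by
        refine setIntegral_mono_on (integrable_pdf.mul_const _).integrableOn
          (integrable_pdf.sub integrable_shifted).integrableOn measurableSet_Iic fun z hz => ?_
        rw [mem_Iic] at hz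
        rw [mul_sub, mul_one]
        gcongr _ - _ * exp ?_
        · exact gaussianPDFReal_nonneg 0 1 z
        · nlinarith
    _ ≤ ∫ z in Iic d₁, (gaussianPDFReal 0 1 z - gaussianPDFReal 0 1 z * exp (s * (z - d₁))) := by
        refine setIntegral_mono_set (integrable_pdf.sub integrable_shifted).integrableOn
          (ae_restrict_of_forall_mem measurableSet_Iic fun z hz => sub_nonneg.2 ?_)
          (Iic_subset_Iic.2 (by linarith)).eventuallyLE
        exact mul_le_of_le_one_right (gaussianPDFReal_nonneg 0 1 z)
          (exp_le_one_iff.2 (mul_nonpos_of_nonneg_of_nonpos hs.le (sub_nonpos.2 hz)))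
    _ = Phi d₁ - exp k * Phi (-k / s - s / 2) := by
        rw [integral_sub integrable_pdf.integrableOn integrable_shifted.integrableOn,
          Phi_eq_integral, exp_mul_Phi_eq_integral k hs.ne']

lemma Phi_mul_one_sub_exp_pos (x : ℝ) {s : ℝ} (hs : 0 < s) : 0 < Phi x * (1 - exp (-s)) :=
  mul_pos (Phi_pos x) (sub_pos.2 (exp_lt_one_iff.2 (neg_lt_zero.2 hs)))

lemma BS_pos (k : ℝ) {w T : ℝ} (hv : 0 < w * T) : 0 < BS k w T :=
  (Phi_mul_one_sub_exp_pos _ (sqrt_pos.2 hv)).trans_le (Phi_mul_one_sub_exp_le_BS k hv)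

lemma exp_mul_le_BS {k s : ℝ} (hk : 0 ≤ k) (hs : 0 < s) :
    exp (-((k / s + 2) ^ 2) / 2) / √(2 * π) * (s * exp (-s)) ≤ BS k (s ^ 2) 1 := by
  have pdf_le : exp (-((k / s + 2) ^ 2) / 2) / √(2 * π) ≤ Phi (-k / s - 1) := by
    have := gaussianPDFReal_le_Phi (d := k / s + 1) (by positivity)
    rwa [gaussianPDFReal_zero_one, add_assoc, one_add_one_eq_two, neg_add', ← neg_div] at this
  have linear_le : s * exp (-s) ≤ 1 - exp (-s) := by
    have h : exp s * exp (-s) = 1 := by rw [← exp_add, add_neg_cancel, exp_zero]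
    nlinarith [mul_le_mul_of_nonneg_right (add_one_le_exp s) (exp_pos (-s)).le]
  have price_ge := Phi_mul_one_sub_exp_le_BS k (w := s ^ 2) (T := 1) (by positivity)
  rw [mul_one, sqrt_sq hs.le] at price_ge
  exact (mul_le_mul pdf_le linear_le (by positivity) (Phi_pos _).le).trans price_ge

lemma tendsto_mul_log_BS {k : ℝ} (hk : 0 ≤ k) :
    Tendsto (fun v => v * log (BS k v 1)) (𝓝[>] 0) (𝓝 (-(k ^ 2 / 2))) := by
  have lower : Tendsto (fun s => -((k + 2 * s) ^ 2) / 2 - s ^ 2 * log √(2 * π) +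
      s * (s * log s) - s ^ 3) (𝓝 0) (𝓝 (-(k ^ 2 / 2))) := by
    have := continuous_mul_log
    refine Continuous.tendsto' (by fun_prop) _ _ ?_
    ring
  have upper : Tendsto (fun v => v * (k / 2) - k ^ 2 / 2) (𝓝[>] 0) (𝓝 (-(k ^ 2 / 2))) :=
    (Continuous.tendsto' (by fun_prop) _ _ (by ring)).mono_left nhdsWithin_le_nhds
  have tendsto_sqrt : Tendsto (fun v => √v) (𝓝[>] 0) (𝓝 0) :=
    (continuous_sqrt.tendsto' 0 0 sqrt_zero).mono_left nhdsWithin_le_nhds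
  refine tendsto_of_tendsto_of_tendsto_of_le_of_le' (lower.comp tendsto_sqrt) upper ?_ ?_ <;>
    filter_upwards [self_mem_nhdsWithin] with v hv
  · obtain ⟨s, hs, rfl⟩ : ∃ s, 0 < s ∧ s ^ 2 = v := ⟨√v, sqrt_pos.2 hv, sq_sqrt (le_of_lt hv)⟩
    have := log_le_log (by positivity) (exp_mul_le_BS hk hs)
    rw [log_mul (by positivity) (by positivity), log_div (by positivity) (by positivity),
      log_mul (by positivity) (by positivity), log_exp, log_exp] at this
    simp only [Function.comp_apply, sqrt_sq hs.le]
    refine Eq.trans_le ?_ (mul_le_mul_of_nonneg_left this (sq_nonneg s))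
    field_simp
    ring
  · have hv : 0 < v := hv
    have := log_le_log (BS_pos k (by simpa using hv)) (BS_le_exp (w := v) (T := 1) hk (by simpa))
    rw [log_exp, mul_one] at this
    refine (mul_le_mul_of_nonneg_left this hv.le).trans_eq ?_
    field_simp

lemma eventually_exp_le_BS {k c : ℝ} (hk : 0 ≤ k) (hc : k ^ 2 / 2 < c) :
    ∀ᶠ v in 𝓝[>] 0, exp (-(c / v)) ≤ BS k v 1 := by
  filter_upwards [(tendsto_mul_log_BS hk).eventually_const_lt (neg_lt_neg hc),
    self_mem_nhdsWithin] with v hlog hv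
  have hv : 0 < v := hv
  rw [← le_log_iff_exp_le (BS_pos k (by simpa using hv)), ← neg_div, div_le_iff₀' hv]
  exact hlog.le

lemma tendsto_nhdsGT_zero_of_tendsto_BS {α : Type*} {l : Filter α} {v : α → ℝ} {k : ℝ}
    (hk : 0 ≤ k) (hv : ∀ᶠ a in l, 0 < v a) (hBS : Tendsto (fun a => BS k (v a) 1) l (𝓝 0)) :
    Tendsto v l (𝓝[>] 0) := by
  refine tendsto_nhdsWithin_iff.2 ⟨tendsto_order.2 ⟨fun a ha => ?_, fun δ hδ => ?_⟩, hv⟩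
  · exact hv.mono fun _ => ha.trans
  filter_upwards [hv, hBS.eventually_lt_const
    (Phi_mul_one_sub_exp_pos (-k / √δ - 1) (sqrt_pos.2 hδ))] with a ha hlt
  by_contra! hδa
  have price_ge := Phi_mul_one_sub_exp_le_BS k (w := v a) (T := 1) (by simpa using ha)
  rw [mul_one] at price_ge
  refine (price_ge.trans_lt hlt).not_ge (mul_le_mul (monotone_Phi ?_) ?_ ?_ (Phi_pos _).le)
  · have : k / √(v a) ≤ k / √δ := by gcongr
    rw [neg_div, neg_div]
    linarith
  · gcongr
  · exact sub_nonneg.2 (exp_le_one_iff.2 (neg_nonpos.2 (sqrt_nonneg δ)))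

/-! ### Laplace's method for densities with stretched exponential tails -/

/-- The nonnegative function `ζ` on `(0, ∞)` behaves like `exp (-b * y ^ r)` up to factors which are
subexponential in `y ^ r`. The upper estimate is required in integrated form, so that `ζ` may be
singular at `0`. -/
structure HasStretchedExpTail (b r : ℝ) (ζ : ℝ → ℝ) : Prop where
  nonneg : ∀ y > 0, 0 ≤ ζ y
  integrableOn : ∀ c < b, IntegrableOn (fun y => exp (c * y ^ r) * ζ y) (Ioi 0)
  eventually_le : ∀ c > b, ∀ᶠ y in atTop, exp (-(c * y ^ r)) ≤ ζ y

lemma one_add_mul_one_sub_inv_le_rpow {r x : ℝ} (hr : 0 ≤ r) (hx : 0 < x) :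
    1 + r * (1 - x⁻¹) ≤ x ^ r := by
  rw [rpow_def_of_pos hx]
  nlinarith [one_sub_inv_le_log_of_pos hx, add_one_le_exp (log x * r)]

lemma tendsto_add_one_div_self_rpow (r : ℝ) :
    Tendsto (fun x : ℝ => ((x + 1) / x) ^ r) atTop (𝓝 1) := by
  have base : Tendsto (fun x : ℝ => (x + 1) / x) atTop (𝓝 1) := by
    have := (tendsto_inv_atTop_zero (𝕜 := ℝ)).const_add 1
    rw [add_zero] at this
    refine this.congr' ?_
    filter_upwards [eventually_ne_atTop 0] with x hx
    field_simp
  simpa using base.rpow_const (p := r) (Or.inl one_ne_zero)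

lemma HasStretchedExpTail.eventually_forall_mem_Icc_le {b r c : ℝ} {ζ : ℝ → ℝ}
    (hζ : HasStretchedExpTail b r ζ) (hb : 0 < b) (hr : 0 < r) (hc : b < c) :
    ∀ᶠ Y in atTop, ∀ y ∈ Icc Y (Y + 1), exp (-(c * Y ^ r)) ≤ ζ y := by
  obtain ⟨c', hbc', hc'c⟩ := exists_between hc
  have hc' : 0 < c' := hb.trans hbc'
  obtain ⟨Y₀, hY₀⟩ := eventually_atTop.1 (hζ.eventually_le c' hbc')
  filter_upwards [eventually_ge_atTop Y₀, eventually_gt_atTop 0,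
    (tendsto_add_one_div_self_rpow r).eventually_lt_const ((one_lt_div hc').2 hc'c)]
    with Y hY hYpos hratio y hy
  rw [div_rpow (by linarith) hYpos.le, div_lt_div_iff₀ (by positivity) hc'] at hratio
  refine le_trans (exp_le_exp.2 (neg_le_neg ?_)) (hY₀ y (hY.trans hy.1))
  calc c' * y ^ r ≤ c' * (Y + 1) ^ r := by
        have := hYpos.trans_le hy.1
        gcongr
        exact hy.2
    _ ≤ c * Y ^ r := by linarith

/-- The point where `κ / y + b * y ^ r` is minimal over `y > 0`. -/
noncomputable def saddlePoint (b r κ : ℝ) : ℝ := (κ / (r * b)) ^ (1 / (1 + r))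

/-- The minimum of `κ / y + b * y ^ r` over `y > 0`; it is the exponential rate of
`∫ y in Ioi 0, exp (-(κ / y + b * y ^ r))` for large `κ`. -/
noncomputable def saddleValue (b r κ : ℝ) : ℝ := (1 + r) * (b * saddlePoint b r κ ^ r)

section Saddle

variable {b r κ : ℝ} (hb : 0 < b) (hr : 0 < r)

include hb hr

lemma saddlePoint_pos (hκ : 0 < κ) : 0 < saddlePoint b r κ := by
  unfold saddlePoint
  positivity

lemma tendsto_saddlePoint_atTop : Tendsto (saddlePoint b r) atTop atTop :=
  (tendsto_rpow_atTop (by positivity)).comp (tendsto_id.atTop_div_const (by positivity))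

lemma tendsto_saddleValue_atTop : Tendsto (saddleValue b r) atTop atTop :=
  (((tendsto_rpow_atTop hr).comp (tendsto_saddlePoint_atTop hb hr)).const_mul_atTop
    hb).const_mul_atTop (by positivity)

-- Vanishing of the derivative `-κ / y ^ 2 + r * b * y ^ (r - 1)` at the saddle point.
lemma div_saddlePoint (hκ : 0 < κ) :
    κ / saddlePoint b r κ = r * (b * saddlePoint b r κ ^ r) := by
  have hY := saddlePoint_pos hb hr hκ
  have rpow_saddlePoint : saddlePoint b r κ ^ (1 + r) = κ / (r * b) := by
    rw [saddlePoint, ← rpow_mul (by positivity), one_div_mul_cancel (by positivity), rpow_one]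
  rw [rpow_add hY, rpow_one, eq_div_iff (by positivity)] at rpow_saddlePoint
  rw [div_eq_iff hY.ne']
  linarith

lemma saddleValue_eq_add (hκ : 0 < κ) :
    saddleValue b r κ = κ / saddlePoint b r κ + b * saddlePoint b r κ ^ r := by
  rw [div_saddlePoint hb hr hκ, saddleValue]
  ring

lemma saddlePoint_mul_saddleValue (hκ : 0 < κ) :
    r / (1 + r) * saddlePoint b r κ * saddleValue b r κ = κ := by
  have critical := div_saddlePoint hb hr hκ
  rw [div_eq_iff (saddlePoint_pos hb hr hκ).ne'] at critical
  calc r / (1 + r) * saddlePoint b r κ * saddleValue b r κ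
      = r * (b * saddlePoint b r κ ^ r) * saddlePoint b r κ := by rw [saddleValue]; field_simp
    _ = κ := critical.symm

lemma saddleValue_le {y : ℝ} (hκ : 0 < κ) (hy : 0 < y) :
    saddleValue b r κ ≤ κ / y + b * y ^ r := by
  have hY := saddlePoint_pos hb hr hκ
  have critical := div_saddlePoint hb hr hκ
  rw [saddleValue]
  set Y := saddlePoint b r κ
  calc (1 + r) * (b * Y ^ r)
      = r * (b * Y ^ r) * (Y / y) + b * Y ^ r * (1 + r * (1 - (y / Y)⁻¹)) := by rw [inv_div]; ring
    _ ≤ r * (b * Y ^ r) * (Y / y) + b * Y ^ r * (y / Y) ^ r := by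
        gcongr
        exact one_add_mul_one_sub_inv_le_rpow hr.le (by positivity)
    _ = κ / y + b * y ^ r := by
        rw [← critical, div_rpow hy.le hY.le]
        field_simp

end Saddle

/-- The undiscounted call price with log-strike `k` and maturity `τ` when the Black–Scholes variance
is random with density `ζ` on `(0, ∞)`. -/
noncomputable def callPrice (k : ℝ) (ζ : ℝ → ℝ) (τ : ℝ) : ℝ := ∫ y in Ioi 0, BS k y τ * ζ y

section CallPrice

variable {k b r : ℝ} {ζ : ℝ → ℝ}

lemma HasStretchedExpTail.integrableOn_BS_mul (hζ : HasStretchedExpTail b r ζ) (hb : 0 < b) (k : ℝ)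
    {τ : ℝ} (hτ : 0 < τ) : IntegrableOn (fun y => BS k y τ * ζ y) (Ioi 0) := by
  have integrable_density : IntegrableOn ζ (Ioi 0) := by simpa using hζ.integrableOn 0 hb
  refine integrable_density.bdd_mul (c := 1) (measurable_BS k τ).aestronglyMeasurable
    (ae_restrict_of_forall_mem measurableSet_Ioi fun y hy => ?_)
  rw [norm_of_nonneg (BS_pos k (mul_pos hy hτ)).le]
  exact (BS_le_Phi k y τ).trans (Phi_le_one _)

lemma HasStretchedExpTail.BS_mul_nonneg (hζ : HasStretchedExpTail b r ζ) (k : ℝ) {y τ : ℝ}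
    (hy : 0 < y) (hτ : 0 < τ) : 0 ≤ BS k y τ * ζ y :=
  mul_nonneg (BS_pos k (mul_pos hy hτ)).le (hζ.nonneg y hy)

lemma HasStretchedExpTail.callPrice_nonneg (hζ : HasStretchedExpTail b r ζ) (k : ℝ) {τ : ℝ}
    (hτ : 0 < τ) : 0 ≤ callPrice k ζ τ :=
  setIntegral_nonneg measurableSet_Ioi fun _ hy => hζ.BS_mul_nonneg k hy hτ

lemma tendsto_sq_div_two_mul_atTop (hk : 0 < k) :
    Tendsto (fun τ => k ^ 2 / (2 * τ)) (𝓝[>] 0) atTop := by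
  have := tendsto_inv_nhdsGT_zero.const_mul_atTop (show 0 < k ^ 2 / 2 by positivity)
  exact this.congr fun τ => by rw [← div_eq_mul_inv, div_div]

-- In `ζ y = exp (-(a * b * y ^ r)) * (exp (a * b * y ^ r) * ζ y)`, the first factor enters the
-- saddle point bound and the second one stays integrable because `a < 1`.
lemma HasStretchedExpTail.callPrice_le (hζ : HasStretchedExpTail b r ζ) (hk : 0 < k) (hb : 0 < b)
    (hr : 0 < r) {a : ℝ} (ha₀ : 0 ≤ a) (ha₁ : a < 1) :
    ∃ M > 0, ∀ τ > 0, callPrice k ζ τ ≤ M * exp (-(a * saddleValue b r (k ^ 2 / (2 * τ)))) := by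
  have integrable_tilted := hζ.integrableOn (a * b) (by nlinarith)
  have tilted_nonneg : 0 ≤ ∫ y in Ioi 0, exp (a * b * y ^ r) * ζ y :=
    setIntegral_nonneg measurableSet_Ioi fun y hy => mul_nonneg (exp_pos _).le (hζ.nonneg y hy)
  refine ⟨exp (k / 2) * (∫ y in Ioi 0, exp (a * b * y ^ r) * ζ y) + 1, by positivity,
    fun τ hτ => ?_⟩
  set Λ := saddleValue b r (k ^ 2 / (2 * τ))
  have price_le : ∀ y > 0, BS k y τ ≤ exp (k / 2) * exp (-(a * Λ)) * exp (a * b * y ^ r) := by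
    intro y hy
    have saddle := saddleValue_le hb hr (κ := k ^ 2 / (2 * τ)) (by positivity) hy
    have : 0 ≤ (1 - a) * (k ^ 2 / (2 * τ) / y) :=
      mul_nonneg (sub_nonneg.2 ha₁.le) (by positivity)
    rw [← exp_add, ← exp_add]
    refine (BS_le_exp hk.le (mul_pos hy hτ)).trans (exp_le_exp.2 ?_)
    rw [show k ^ 2 / (2 * (y * τ)) = k ^ 2 / (2 * τ) / y by field_simp]
    linarith [mul_le_mul_of_nonneg_left saddle ha₀]
  calc callPrice k ζ τ
      ≤ ∫ y in Ioi 0, exp (k / 2) * exp (-(a * Λ)) * (exp (a * b * y ^ r) * ζ y) :=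
        setIntegral_mono_on (hζ.integrableOn_BS_mul hb k hτ) (integrable_tilted.const_mul _)
          measurableSet_Ioi fun y hy => by
            rw [← mul_assoc]
            exact mul_le_mul_of_nonneg_right (price_le y hy) (hζ.nonneg y hy)
    _ = exp (k / 2) * (∫ y in Ioi 0, exp (a * b * y ^ r) * ζ y) * exp (-(a * Λ)) := by
        rw [integral_const_mul]
        ring
    _ ≤ _ := by
        gcongr
        linarith

-- The total variance at the saddle point is `(k ^ 2 / 2) / (κ / Y)` with `κ / Y = r * b * Y ^ r`.
lemma tendsto_saddlePoint_add_one_mul (hk : 0 < k) (hb : 0 < b) (hr : 0 < r) :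
    Tendsto (fun τ => (saddlePoint b r (k ^ 2 / (2 * τ)) + 1) * τ) (𝓝[>] 0) (𝓝 0) := by
  have rate_atTop : Tendsto (fun Y => r * (b * Y ^ r)) atTop atTop :=
    ((tendsto_rpow_atTop hr).const_mul_atTop hb).const_mul_atTop hr
  have saddle_part := ((rate_atTop.comp (tendsto_saddlePoint_atTop hb hr)).comp
    (tendsto_sq_div_two_mul_atTop hk)).const_div_atTop (k ^ 2 / 2)
  have sum := saddle_part.add (tendsto_id.mono_left (nhdsWithin_le_nhds (s := Ioi (0 : ℝ))))
  rw [add_zero] at sum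
  refine sum.congr' ?_
  filter_upwards [self_mem_nhdsWithin] with τ hτ
  have hτ : 0 < τ := hτ
  have hκ : 0 < k ^ 2 / (2 * τ) := by positivity
  simp only [Function.comp_apply, id]
  rw [← div_saddlePoint hb hr hκ]
  field_simp

-- Only the variances in the unit interval to the right of the saddle point are kept.
lemma HasStretchedExpTail.eventually_exp_le_callPrice (hζ : HasStretchedExpTail b r ζ)
    (hk : 0 < k) (hb : 0 < b) (hr : 0 < r) {a : ℝ} (ha : 1 < a) :
    ∀ᶠ τ in 𝓝[>] 0, exp (-(a * saddleValue b r (k ^ 2 / (2 * τ)))) ≤ callPrice k ζ τ := by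
  obtain ⟨δ, hδ, price_ge⟩ := mem_nhdsGT_iff_exists_Ioo_subset.1
    (eventually_exp_le_BS (c := a * (k ^ 2 / 2)) hk.le (by nlinarith [sq_pos_of_pos hk]))
  have density_ge := ((tendsto_saddlePoint_atTop hb hr).comp
    (tendsto_sq_div_two_mul_atTop hk)).eventually
    (hζ.eventually_forall_mem_Icc_le hb hr (show b < a * b by nlinarith))
  filter_upwards [density_ge, (tendsto_saddlePoint_add_one_mul hk hb hr).eventually_lt_const hδ,
    self_mem_nhdsWithin] with τ density_ge hδτ hτ
  have hτ : 0 < τ := hτ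
  have hκ : 0 < k ^ 2 / (2 * τ) := by positivity
  have hY := saddlePoint_pos hb hr hκ
  have value_eq := saddleValue_eq_add hb hr hκ
  simp only [Function.comp_apply] at density_ge
  set Y := saddlePoint b r (k ^ 2 / (2 * τ))
  set Λ := saddleValue b r (k ^ 2 / (2 * τ))
  refine le_setIntegral_of_forall_mem_Icc_add_one measurableSet_Ioi
    (hζ.integrableOn_BS_mul hb k hτ) (fun y hy => hζ.BS_mul_nonneg k hy hτ)
    (fun y hy => hY.trans_le hy.1) fun y hy => ?_
  have hy₀ : 0 < y := hY.trans_le hy.1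
  have hyδ : y * τ < δ := (mul_le_mul_of_nonneg_right hy.2 hτ.le).trans_lt hδτ
  have price_ge : exp (-(a * (k ^ 2 / (2 * τ) / Y))) ≤ BS k y τ := by
    rw [BS_eq_BS_mul_one]
    refine le_trans (exp_le_exp.2 (neg_le_neg ?_)) (price_ge ⟨mul_pos hy₀ hτ, hyδ⟩)
    rw [show a * (k ^ 2 / (2 * τ) / Y) = a * (k ^ 2 / 2) / (Y * τ) by field_simp]
    gcongr
    exact hy.1
  calc exp (-(a * Λ)) = exp (-(a * (k ^ 2 / (2 * τ) / Y))) * exp (-(a * b * Y ^ r)) := by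
        rw [← exp_add, value_eq]
        ring_nf
    _ ≤ BS k y τ * ζ y :=
        mul_le_mul price_ge (density_ge y hy) (exp_pos _).le ((exp_pos _).le.trans price_ge)

lemma tendsto_saddleValue_nhdsGT_zero (hk : 0 < k) (hb : 0 < b) (hr : 0 < r) :
    Tendsto (fun τ => saddleValue b r (k ^ 2 / (2 * τ))) (𝓝[>] 0) atTop :=
  (tendsto_saddleValue_atTop hb hr).comp (tendsto_sq_div_two_mul_atTop hk)

lemma HasStretchedExpTail.tendsto_callPrice (hζ : HasStretchedExpTail b r ζ) (hk : 0 < k)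
    (hb : 0 < b) (hr : 0 < r) : Tendsto (callPrice k ζ) (𝓝[>] 0) (𝓝 0) := by
  obtain ⟨M, -, price_le⟩ := hζ.callPrice_le hk hb hr (a := 1 / 2) (by norm_num) (by norm_num)
  have bound_tendsto := (tendsto_exp_neg_atTop_nhds_zero.comp
    ((tendsto_saddleValue_nhdsGT_zero hk hb hr).const_mul_atTop one_half_pos)).const_mul M
  rw [mul_zero] at bound_tendsto
  refine tendsto_of_tendsto_of_tendsto_of_le_of_le' tendsto_const_nhds bound_tendsto ?_ ?_ <;>
    filter_upwards [self_mem_nhdsWithin] with τ hτ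
  exacts [hζ.callPrice_nonneg k hτ, price_le τ hτ]

theorem HasStretchedExpTail.tendsto_log_callPrice_div (hζ : HasStretchedExpTail b r ζ) (hk : 0 < k)
    (hb : 0 < b) (hr : 0 < r) :
    Tendsto (fun τ => log (callPrice k ζ τ) / saddleValue b r (k ^ 2 / (2 * τ))) (𝓝[>] 0)
      (𝓝 (-1)) := by
  have rate_atTop := tendsto_saddleValue_nhdsGT_zero hk hb hr
  have callPrice_pos : ∀ᶠ τ in 𝓝[>] 0, 0 < callPrice k ζ τ :=
    (hζ.eventually_exp_le_callPrice hk hb hr one_lt_two).mono fun _ => (exp_pos _).trans_le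
  refine tendsto_order.2 ⟨fun e he => ?_, fun e he => ?_⟩
  · obtain ⟨a, ha, hae⟩ := exists_between (lt_neg_of_lt_neg he)
    filter_upwards [hζ.eventually_exp_le_callPrice hk hb hr ha, callPrice_pos,
      rate_atTop.eventually_gt_atTop 0] with τ hle hpos hrate
    rw [← le_log_iff_exp_le hpos] at hle
    rw [lt_div_iff₀ hrate]
    nlinarith
  · obtain ⟨a, ha, ha₁⟩ := exists_between (max_lt (neg_lt.1 he) one_pos)
    obtain ⟨hea, ha₀⟩ := max_lt_iff.1 ha
    obtain ⟨M, hM, price_le⟩ := hζ.callPrice_le hk hb hr ha₀.le ha₁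
    filter_upwards [callPrice_pos, rate_atTop.eventually_gt_atTop 0, self_mem_nhdsWithin,
      (rate_atTop.const_div_atTop (log M)).eventually_lt_const (show 0 < e + a by linarith)]
      with τ hpos hrate hτ hconst
    have log_le := log_le_log hpos (price_le τ hτ)
    rw [log_mul hM.ne' (exp_ne_zero _), log_exp] at log_le
    rw [div_lt_iff₀ hrate] at hconst ⊢
    linarith

theorem HasStretchedExpTail.tendsto_impliedVariance_div (hζ : HasStretchedExpTail b r ζ)
    (hk : 0 < k) (hb : 0 < b) (hr : 0 < r) {w : ℝ → ℝ}
    (hw : ∀ᶠ τ in 𝓝[>] 0, 0 < w τ ∧ BS k (w τ) τ = callPrice k ζ τ) :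
    Tendsto (fun τ => w τ / (r / (1 + r) * saddlePoint b r (k ^ 2 / (2 * τ)))) (𝓝[>] 0)
      (𝓝 1) := by
  have price_eq : ∀ᶠ τ in 𝓝[>] 0, BS k (w τ * τ) 1 = callPrice k ζ τ :=
    hw.mono fun τ hτ => by rw [← BS_eq_BS_mul_one, hτ.2]
  have totalVariance_tendsto : Tendsto (fun τ => w τ * τ) (𝓝[>] 0) (𝓝[>] 0) := by
    refine tendsto_nhdsGT_zero_of_tendsto_BS hk.le ?_
      ((hζ.tendsto_callPrice hk hb hr).congr' (EventuallyEq.symm price_eq))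
    filter_upwards [hw, self_mem_nhdsWithin] with τ hwτ hτ using mul_pos hwτ.1 hτ
  have log_ratio := hζ.tendsto_log_callPrice_div hk hb hr
  have quotient := (((tendsto_mul_log_BS hk.le).comp totalVariance_tendsto).div log_ratio
    (by norm_num)).div_const (k ^ 2 / 2)
  rw [neg_div_neg_eq, div_one, div_self (by positivity)] at quotient
  refine quotient.congr' ?_
  filter_upwards [price_eq, self_mem_nhdsWithin,
    log_ratio.eventually_ne (by norm_num : (-1 : ℝ) ≠ 0)] with τ price_eq hτ hne
  have hτ : 0 < τ := hτ
  have hκ : 0 < k ^ 2 / (2 * τ) := by positivity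
  obtain ⟨log_ne, value_ne⟩ := div_ne_zero_iff.1 hne
  have hY := saddlePoint_pos hb hr hκ
  have product_eq := saddlePoint_mul_saddleValue hb hr hκ
  simp only [Pi.div_apply, Function.comp_apply, price_eq]
  set Y := saddlePoint b r (k ^ 2 / (2 * τ))
  set Λ := saddleValue b r (k ^ 2 / (2 * τ))
  rw [show k ^ 2 / 2 = r / (1 + r) * Y * Λ * τ by rw [product_eq]; field_simp]
  field_simp

end CallPrice

/-! ### The modified Bessel function -/

lemma factorial_mul_Gamma_le {ν : ℝ} (hν : 0 ≤ ν) (m : ℕ) :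
    m.factorial * Gamma (ν + 1) ≤ Gamma (m + ν + 1) := by
  induction m with
  | zero => simp
  | succ m ih =>
    calc ((m + 1).factorial : ℝ) * Gamma (ν + 1)
        = (m + 1) * (m.factorial * Gamma (ν + 1)) := by rw [Nat.factorial_succ]; push_cast; ring
      _ ≤ (m + ν + 1) * Gamma (m + ν + 1) := by
        have := Gamma_pos_of_pos (show 0 < ν + 1 by linarith)
        gcongr
        linarith
      _ = Gamma ((m + 1 : ℕ) + ν + 1) := by
        rw [← Gamma_add_one (by positivity)]
        push_cast
        ring_nf

lemma factorial_two_mul_le_four_pow_mul (m : ℕ) :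
    (2 * m).factorial ≤ 4 ^ m * (m.factorial * m.factorial) := by
  rw [two_mul, ← Nat.add_choose_mul_factorial_mul_factorial, ← two_mul, mul_assoc,
    ← Nat.centralBinom_eq_two_mul_choose]
  exact Nat.mul_le_mul_right _ (Nat.centralBinom_le_four_pow m)

/-- The `m`-th term of the power series defining `besselI ν x`. -/
noncomputable def besselITerm (ν x : ℝ) (m : ℕ) : ℝ :=
  (x / 2) ^ (2 * (m : ℝ) + ν) / ((m.factorial : ℝ) * Gamma ((m : ℝ) + ν + 1))

section Bessel

variable {ν x : ℝ} (hν : 0 ≤ ν) (hx : 0 < x)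

include hν hx

lemma besselITerm_nonneg (m : ℕ) : 0 ≤ besselITerm ν x m := by
  unfold besselITerm
  positivity

-- The majorant is the power series of `(x / 2) ^ ν / Γ(ν + 1) * cosh x`.
lemma besselITerm_le (m : ℕ) :
    besselITerm ν x m ≤ (x / 2) ^ ν / Gamma (ν + 1) * (x ^ (2 * m) / (2 * m).factorial) := by
  have : 0 < Gamma (ν + 1) := Gamma_pos_of_pos (by linarith)
  have denominator_ge : Gamma (ν + 1) * (2 * m).factorial ≤
      4 ^ m * (m.factorial * Gamma (m + ν + 1)) :=
    calc Gamma (ν + 1) * (2 * m).factorial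
        ≤ Gamma (ν + 1) * (4 ^ m * (m.factorial * m.factorial)) := by
          gcongr
          exact_mod_cast factorial_two_mul_le_four_pow_mul m
      _ = 4 ^ m * (m.factorial * (m.factorial * Gamma (ν + 1))) := by ring
      _ ≤ 4 ^ m * (m.factorial * Gamma (m + ν + 1)) := by
          gcongr
          exact factorial_mul_Gamma_le hν m
  have rpow_eq : (x / 2) ^ (2 * (m : ℝ) + ν) = (x / 2) ^ ν * (x ^ (2 * m) / 4 ^ m) := by
    rw [rpow_add (by positivity), ← Nat.cast_two, ← Nat.cast_mul, rpow_natCast, pow_mul, div_pow,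
      div_pow, pow_mul, Nat.cast_two, mul_comm]
    norm_num
  calc besselITerm ν x m
      = (x / 2) ^ ν * x ^ (2 * m) / (4 ^ m * (m.factorial * Gamma (m + ν + 1))) := by
        rw [besselITerm, rpow_eq, mul_div_assoc', div_div]
    _ ≤ (x / 2) ^ ν * x ^ (2 * m) / (Gamma (ν + 1) * (2 * m).factorial) := by gcongr
    _ = (x / 2) ^ ν / Gamma (ν + 1) * (x ^ (2 * m) / (2 * m).factorial) := mul_div_mul_comm ..

lemma summable_besselITerm : Summable (besselITerm ν x) :=
  .of_nonneg_of_le (besselITerm_nonneg hν hx) (besselITerm_le hν hx)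
    ((hasSum_cosh x).summable.mul_left _)

lemma le_besselI : (x / 2) ^ ν / Gamma (ν + 1) ≤ besselI ν x :=
  calc (x / 2) ^ ν / Gamma (ν + 1) = besselITerm ν x 0 := by simp [besselITerm]
    _ ≤ besselI ν x := (summable_besselITerm hν hx).le_tsum 0 fun m _ => besselITerm_nonneg hν hx m

lemma besselI_le : besselI ν x ≤ (x / 2) ^ ν / Gamma (ν + 1) * exp x := by
  have majorant_hasSum := (hasSum_cosh x).mul_left ((x / 2) ^ ν / Gamma (ν + 1))
  have : 0 < Gamma (ν + 1) := Gamma_pos_of_pos (by linarith)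
  calc besselI ν x ≤ (x / 2) ^ ν / Gamma (ν + 1) * cosh x :=
        ((summable_besselITerm hν hx).tsum_le_tsum (besselITerm_le hν hx)
          majorant_hasSum.summable).trans_eq majorant_hasSum.tsum_eq
    _ ≤ (x / 2) ^ ν / Gamma (ν + 1) * exp x := by
        gcongr
        linarith [cosh_add_sinh x, sinh_pos_iff.2 hx]

omit hx in
lemma monotoneOn_besselI : MonotoneOn (besselI ν) (Ioi 0) := by
  intro x hx y hy hxy
  rw [mem_Ioi] at hx
  refine (summable_besselITerm hν hx).tsum_le_tsum (fun m => ?_) (summable_besselITerm hν hy)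
  gcongr

end Bessel

/-! ### Tails of the CEV density -/

section Tail

variable {b c r s K : ℝ} {ζ : ℝ → ℝ}

lemma mul_le_mul_sq_add_sq_div {δ : ℝ} (hδ : 0 < δ) (c u : ℝ) :
    c * u ≤ δ * u ^ 2 + c ^ 2 / (4 * δ) := by
  have : δ * u ^ 2 + c ^ 2 / (4 * δ) - c * u = (2 * δ * u - c) ^ 2 / (4 * δ) := by field_simp; ring
  have : 0 ≤ (2 * δ * u - c) ^ 2 / (4 * δ) := by positivity
  linarith

lemma integrableOn_exp_mul_rpow_mul_of_le (hζm : AEMeasurable ζ (volume.restrict (Ioi 0)))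
    (hζ₀ : ∀ y > 0, 0 ≤ ζ y) (hs : -1 < s) (hr : 0 < r) (hK : 0 ≤ K)
    (hζ : ∀ y > 0, ζ y ≤ K * y ^ s * exp (-(b * y ^ r) + c * y ^ (r / 2))) {a : ℝ} (ha : a < b) :
    IntegrableOn (fun y => exp (a * y ^ r) * ζ y) (Ioi 0) := by
  obtain ⟨δ, hδ, hδb⟩ : ∃ δ > 0, a - b + δ = -δ := ⟨(b - a) / 2, by linarith, by ring⟩
  refine Integrable.mono' (g := fun y => K * exp (c ^ 2 / (4 * δ)) * (y ^ s * exp (-δ * y ^ r)))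
    ((integrableOn_rpow_mul_exp_neg_mul_rpow hs hr hδ).const_mul _)
    (AEMeasurable.aestronglyMeasurable (by fun_prop))
    (ae_restrict_of_forall_mem measurableSet_Ioi fun y hy => ?_)
  have hy : 0 < y := hy
  rw [norm_of_nonneg (mul_nonneg (exp_pos _).le (hζ₀ y hy))]
  have cross_term := mul_le_mul_sq_add_sq_div hδ c (y ^ (r / 2))
  rw [← rpow_mul_natCast hy.le, Nat.cast_two, div_mul_cancel₀ _ two_ne_zero] at cross_term
  calc exp (a * y ^ r) * ζ y
      ≤ exp (a * y ^ r) * (K * y ^ s * exp (-(b * y ^ r) + c * y ^ (r / 2))) := by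
        gcongr
        exact hζ y hy
    _ = K * y ^ s * exp ((a - b) * y ^ r + c * y ^ (r / 2)) := by
        rw [mul_left_comm, ← exp_add]
        ring_nf
    _ ≤ K * y ^ s * exp (c ^ 2 / (4 * δ) + -δ * y ^ r) := by
        gcongr K * y ^ s * exp ?_
        rw [← hδb]
        linarith
    _ = K * exp (c ^ 2 / (4 * δ)) * (y ^ s * exp (-δ * y ^ r)) := by
        rw [exp_add]
        ring

lemma eventually_exp_neg_mul_rpow_le_of_le (hr : 0 < r) (hK : 0 < K)
    (hζ : ∀ y > 0, K * y ^ s * exp (-(b * y ^ r)) ≤ ζ y) {a : ℝ} (ha : b < a) :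
    ∀ᶠ y in atTop, exp (-(a * y ^ r)) ≤ ζ y := by
  have decay := (tendsto_rpow_mul_exp_neg_mul_atTop_nhds_zero (-s / r) (a - b)
    (sub_pos.2 ha)).comp (tendsto_rpow_atTop hr)
  filter_upwards [decay.eventually_lt_const hK, eventually_gt_atTop 0] with y hlt hy
  rw [Function.comp_apply, ← rpow_mul hy.le, mul_div_cancel₀ _ hr.ne', rpow_neg hy.le,
    inv_mul_lt_iff₀ (by positivity)] at hlt
  calc exp (-(a * y ^ r)) = exp (-(a - b) * y ^ r) * exp (-(b * y ^ r)) := by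
        rw [← exp_add]
        ring_nf
    _ ≤ K * y ^ s * exp (-(b * y ^ r)) := by
        gcongr
        linarith
    _ ≤ ζ y := hζ y hy

lemma HasStretchedExpTail.of_bounds (hζm : AEMeasurable ζ (volume.restrict (Ioi 0)))
    (hs : -1 < s) (hr : 0 < r) (hK : 0 < K)
    (hle : ∀ y > 0, K * y ^ s * exp (-(b * y ^ r)) ≤ ζ y)
    (hge : ∀ y > 0, ζ y ≤ K * y ^ s * exp (-(b * y ^ r) + c * y ^ (r / 2))) :
    HasStretchedExpTail b r ζ where
  nonneg y hy := le_trans (by positivity) (hle y hy)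
  integrableOn _ := integrableOn_exp_mul_rpow_mul_of_le hζm
    (fun y hy => le_trans (by positivity) (hle y hy)) hs hr hK.le hge
  eventually_le _ := eventually_exp_neg_mul_rpow_le_of_le hr hK hle

end Tail

/-- The density at time `t` of the CEV diffusion `dY = ξ Y ^ p dW`, started at `y0` and absorbed
at `0`. -/
noncomputable def cevDensity (t ξ y0 p z : ℝ) : ℝ :=
  √y0 * z ^ ((1 : ℝ) / 2 - 2 * p) / ((1 - p) * ξ ^ 2 * t)
    * exp (-(z ^ (2 * (1 - p)) + y0 ^ (2 * (1 - p))) / (2 * ξ ^ 2 * t * (1 - p) ^ 2))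
    * besselI (1 / (2 * (1 - p))) ((y0 * z) ^ (1 - p) / ((1 - p) ^ 2 * ξ ^ 2 * t))

/-- The coefficient of `z ^ (2 * (1 - p))` in the exponential decay of `cevDensity t ξ y0 p z`. -/
noncomputable def cevTailRate (t ξ p : ℝ) : ℝ := 1 / (2 * ξ ^ 2 * t * (1 - p) ^ 2)

section CEV

variable {t ξ y0 p : ℝ} (ht : 0 < t) (hξ : 0 < ξ) (hy0 : 0 < y0) (hp : p < 1)

include ht hξ hy0 hp

lemma aemeasurable_cevDensity : AEMeasurable (cevDensity t ξ y0 p) (volume.restrict (Ioi 0)) := by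
  have : 0 < 1 - p := sub_pos.2 hp
  have bessel_monotoneOn : MonotoneOn (fun z => besselI (1 / (2 * (1 - p)))
      ((y0 * z) ^ (1 - p) / ((1 - p) ^ 2 * ξ ^ 2 * t))) (Ioi 0) := by
    refine (monotoneOn_besselI (by positivity)).comp (fun x hx y hy hxy => ?_) fun x hx => ?_
    all_goals rw [mem_Ioi] at *
    · gcongr
    · positivity
  have := aemeasurable_restrict_of_monotoneOn (μ := volume) measurableSet_Ioi bessel_monotoneOn
  unfold cevDensity
  fun_prop

lemma exists_cevDensity_bounds : ∃ K > 0, ∃ c, ∀ y > 0,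
    K * y ^ (1 - 2 * p) * exp (-(cevTailRate t ξ p * y ^ (2 * (1 - p)))) ≤ cevDensity t ξ y0 p y ∧
    cevDensity t ξ y0 p y ≤ K * y ^ (1 - 2 * p) *
      exp (-(cevTailRate t ξ p * y ^ (2 * (1 - p))) + c * y ^ (2 * (1 - p) / 2)) := by
  obtain ⟨q, rfl⟩ : ∃ q, p = 1 - q := ⟨1 - p, by ring⟩
  have hq : 0 < q := by linarith
  simp only [cevDensity, cevTailRate, sub_sub_cancel, mul_div_cancel_left₀ q two_ne_zero]
  set ν := 1 / (2 * q) with hν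
  have hν₀ : 0 ≤ ν := by positivity
  have : 0 < Gamma (ν + 1) := Gamma_pos_of_pos (by positivity)
  obtain ⟨c, hc, bessel_arg⟩ : ∃ c > 0, ∀ y > 0, (y0 * y) ^ q / (q ^ 2 * ξ ^ 2 * t) = c * y ^ q :=
    ⟨y0 ^ q / (q ^ 2 * ξ ^ 2 * t), by positivity, fun y hy => by
      rw [mul_rpow hy0.le (le_of_lt hy), div_mul_eq_mul_div]⟩
  set b := 1 / (2 * ξ ^ 2 * t * q ^ 2) with hb
  refine ⟨√y0 / (q * ξ ^ 2 * t) * exp (-(b * y0 ^ (2 * q))) * ((c / 2) ^ ν / Gamma (ν + 1)),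
    by positivity, c, fun y hy => ?_⟩
  have bessel_prefactor : (c * y ^ q / 2) ^ ν = (c / 2) ^ ν * y ^ (1 / 2 : ℝ) := by
    rw [mul_div_right_comm, mul_rpow (by positivity) (by positivity), ← rpow_mul hy.le, hν]
    field_simp
  have rpow_split : y ^ (1 - 2 * (1 - q)) = y ^ (1 / 2 - 2 * (1 - q)) * y ^ (1 / 2 : ℝ) := by
    rw [← rpow_add hy]
    ring_nf
  have exp_split : exp (-(y ^ (2 * q) + y0 ^ (2 * q)) / (2 * ξ ^ 2 * t * q ^ 2)) =
      exp (-(b * y0 ^ (2 * q))) * exp (-(b * y ^ (2 * q))) := by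
    rw [← exp_add, hb]
    ring_nf
  have lower := le_besselI hν₀ (x := c * y ^ q) (by positivity)
  have upper := besselI_le hν₀ (x := c * y ^ q) (by positivity)
  rw [bessel_prefactor] at lower upper
  rw [bessel_arg y hy, rpow_split, exp_split, exp_add]
  constructor
  · refine Eq.trans_le ?_ (mul_le_mul_of_nonneg_left lower (by positivity))
    ring
  · refine (mul_le_mul_of_nonneg_left upper (by positivity)).trans_eq ?_
    ring

lemma hasStretchedExpTail_cevDensity :
    HasStretchedExpTail (cevTailRate t ξ p) (2 * (1 - p)) (cevDensity t ξ y0 p) := by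
  obtain ⟨K, hK, c, bounds⟩ := exists_cevDensity_bounds ht hξ hy0 hp
  exact .of_bounds (aemeasurable_cevDensity ht hξ hy0 hp) (by linarith) (by linarith) hK
    (fun y hy => (bounds y hy).1) fun y hy => (bounds y hy).2

end CEV

theorem stmt_13 (t ξ y0 p : ℝ) (ht : 0 < t) (hξ : 0 < ξ) (hy0 : 0 < y0) (hp : p < 1)
    (k : ℝ) (hk : 0 < k) :
    let βp : ℝ := 1 / (3 - 2 * p)
    -- the absorbed CEV density (case `p < 1`)
    let ζ : ℝ → ℝ := fun z =>
      Real.sqrt y0 * z ^ ((1 : ℝ) / 2 - 2 * p) / ((1 - p) * ξ ^ 2 * t)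
        * Real.exp (-(z ^ (2 * (1 - p)) + y0 ^ (2 * (1 - p))) / (2 * ξ ^ 2 * t * (1 - p) ^ 2))
        * besselI (1 / (2 * (1 - p))) ((y0 * z) ^ (1 - p) / ((1 - p) ^ 2 * ξ ^ 2 * t))
    -- the call price
    let C : ℝ → ℝ := fun τ => ∫ y in Set.Ioi (0 : ℝ), BS k y τ * ζ y
    ∀ τ₀ > (0 : ℝ), ∀ σ : ℝ → ℝ,
      (∀ τ ∈ Set.Ioo (0 : ℝ) τ₀, 0 < σ τ ∧ BS k (σ τ ^ 2) τ = C τ) →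
      Filter.Tendsto
        (fun τ => σ τ ^ 2 / ((1 - βp) * (k ^ 2 * ξ ^ 2 * t * (1 - p) / (2 * τ)) ^ βp))
        (nhdsWithin 0 (Set.Ioi 0)) (nhds 1) := by
  intro βp ζ C τ₀ hτ₀ σ hσ
  have hq : 0 < 1 - p := sub_pos.2 hp
  have rate_pos : 0 < cevTailRate t ξ p := by unfold cevTailRate; positivity
  have implied : ∀ᶠ τ in 𝓝[>] 0,
      0 < σ τ ^ 2 ∧ BS k (σ τ ^ 2) τ = callPrice k (cevDensity t ξ y0 p) τ := by
    filter_upwards [Ioo_mem_nhdsGT hτ₀] with τ hτ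
    exact ⟨pow_pos (hσ τ hτ).1 2, (hσ τ hτ).2⟩
  have exponent_eq : 1 / (1 + 2 * (1 - p)) = βp := by simp only [βp]; ring_nf
  have prefactor_eq : 2 * (1 - p) / (1 + 2 * (1 - p)) = 1 - βp := by
    rw [← exponent_eq]
    field_simp
    ring
  refine ((hasStretchedExpTail_cevDensity ht hξ hy0 hp).tendsto_impliedVariance_div hk rate_pos
    (by positivity) implied).congr fun τ => ?_
  rw [prefactor_eq, saddlePoint, exponent_eq, cevTailRate]
  congr 3
  field_simp
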